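/- Let k ≥ 2 be an integer and ζ ∈ ℂ a primitive k-th root of unity. Let σ be the ℂ-algebra automorphism of ℂ[u,v,t] with σ(u) = ζ·u, σ(v) = ζ⁻¹·v, σ(t) = t, generating an action of ℤ/kℤ. This action preserves the ideal (u^k·t) and hence descends to the quotient ring ℂ[u,v,t]/(u^k·t). The subring of ℤ/kℤ-invariants of ℂ[u,v,t]/(u^k·t) is isomorphic as a ℂ-algebra to ℂ[x,y,z,t]/(x·y − z^k, x·t), via x ↦ u^k, y ↦ v^k, z ↦ u·v, t ↦ t. -/

import Mathlib

open MvPolynomial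

/-- The ℂ-algebra endomorphism σ of ℂ[u,v,t] with σ(u) = ζ·u, σ(v) = ζ⁻¹·v, σ(t) = t, the
generator of the cyclic group action denoted 1/k(1,−1,0). -/
noncomputable def sigma (ζ : ℂ) : MvPolynomial (Fin 3) ℂ →ₐ[ℂ] MvPolynomial (Fin 3) ℂ :=
  aeval ![C ζ * X 0, C ζ⁻¹ * X 1, X 2]

/-- The ideal `(u^k·t)` of `ℂ[u,v,t]`. -/
noncomputable def J (k : ℕ) : Ideal (MvPolynomial (Fin 3) ℂ) :=
  Ideal.span {(X 0 ^ k * X 2 : MvPolynomial (Fin 3) ℂ)}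

/-- The ideal `(x·y − z^k, x·t)` of `ℂ[x,y,z,t]`. -/
noncomputable def I (k : ℕ) : Ideal (MvPolynomial (Fin 4) ℂ) :=
  Ideal.span
    {(X 0 * X 1 - X 2 ^ k : MvPolynomial (Fin 4) ℂ), (X 0 * X 3 : MvPolynomial (Fin 4) ℂ)}

/-- the exponent formula for the inverse map on monomials -/
noncomputable def psiVal (k : ℕ) (s : Fin 3 →₀ ℕ) : MvPolynomial (Fin 4) ℂ ⧸ I k :=
  if s 0 ≡ s 1 [MOD k] then
    Ideal.Quotient.mk (I k)
      (X 0 ^ ((s 0 - s 1) / k) * X 1 ^ ((s 1 - s 0) / k) * X 2 ^ (min (s 0) (s 1)) * X 3 ^ (s 2))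
  else 0

/-- linear retraction -/
noncomputable def psi (k : ℕ) : MvPolynomial (Fin 3) ℂ →ₗ[ℂ] MvPolynomial (Fin 4) ℂ ⧸ I k :=
  (basisMonomials (Fin 3) ℂ).constr ℂ (psiVal k)

/-- the map on polynomial rings -/
noncomputable def phi (k : ℕ) : MvPolynomial (Fin 4) ℂ →ₐ[ℂ] MvPolynomial (Fin 3) ℂ :=
  aeval ![X 0 ^ k, X 1 ^ k, X 0 * X 1, X 2]

lemma psi_monomial (k : ℕ) (s : Fin 3 →₀ ℕ) : psi k (monomial s 1) = psiVal k s := by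
  have := (basisMonomials (Fin 3) ℂ).constr_basis ℂ (psiVal k) s
  simpa [psi] using this

lemma mon3 (s : Fin 3 →₀ ℕ) :
    (monomial s 1 : MvPolynomial (Fin 3) ℂ) = X 0 ^ s 0 * X 1 ^ s 1 * X 2 ^ s 2 := by
  rw [monomial_eq, Finsupp.prod_fintype _ _ (by simp), Fin.prod_univ_three]; simp

lemma mon4 (s : Fin 4 →₀ ℕ) :
    (monomial s 1 : MvPolynomial (Fin 4) ℂ) = X 0 ^ s 0 * X 1 ^ s 1 * X 2 ^ s 2 * X 3 ^ s 3 := by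
  rw [monomial_eq, Finsupp.prod_fintype _ _ (by simp), Fin.prod_univ_four]; simp

lemma psi_mon (k a b c : ℕ) : psi k (X 0 ^ a * X 1 ^ b * X 2 ^ c) =
    if a ≡ b [MOD k] then Ideal.Quotient.mk (I k)
      (X 0 ^ ((a - b) / k) * X 1 ^ ((b - a) / k) * X 2 ^ (min a b) * X 3 ^ c)
    else 0 := by
  have := mon3 (Finsupp.equivFunOnFinite.symm ![a, b, c])
  simp only [Finsupp.equivFunOnFinite_symm_apply_apply, Matrix.cons_val] at this
  rw [← this, psi_monomial]
  simp [psiVal]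

lemma rel1 (k : ℕ) : Ideal.Quotient.mk (I k) (X 2) ^ k =
    Ideal.Quotient.mk (I k) (X 0) * Ideal.Quotient.mk (I k) (X 1) := by
  rw [← map_pow, ← map_mul, eq_comm, Ideal.Quotient.eq]
  exact Ideal.subset_span (by simp)

lemma rel2 (k : ℕ) : Ideal.Quotient.mk (I k) (X 0) * Ideal.Quotient.mk (I k) (X 3) = 0 := by
  rw [← map_mul, Ideal.Quotient.eq_zero_iff_mem]
  exact Ideal.subset_span (by simp)

lemma psi_phi (k : ℕ) (hk : 2 ≤ k) (p : MvPolynomial (Fin 4) ℂ) :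
    psi k (phi k p) = Ideal.Quotient.mk (I k) p := by
  have : psi k ∘ₗ (phi k).toLinearMap = (Ideal.Quotient.mkₐ ℂ (I k)).toLinearMap := by
    refine (basisMonomials (Fin 4) ℂ).ext fun s => ?_
    simp only [coe_basisMonomials, LinearMap.comp_apply, AlgHom.toLinearMap_apply,
      Ideal.Quotient.mkₐ_eq_mk]
    rw [mon4]
    generalize s 0 = i, s 1 = j, s 2 = l, s 3 = m
    have e : phi k (X 0 ^ i * X 1 ^ j * X 2 ^ l * X 3 ^ m) =
        X 0 ^ (k * i + l) * X 1 ^ (k * j + l) * X 2 ^ m := by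
      simp [phi]; ring
    rw [e, psi_mon, if_pos (by simp [Nat.ModEq, Nat.add_mod])]
    have h1 : (k * i + l - (k * j + l)) / k = i - j := by
      rw [Nat.add_sub_add_right, ← Nat.mul_sub, Nat.mul_div_cancel_left _ (by omega)]
    have h2 : (k * j + l - (k * i + l)) / k = j - i := by
      rw [Nat.add_sub_add_right, ← Nat.mul_sub, Nat.mul_div_cancel_left _ (by omega)]
    have h3 : min (k * i + l) (k * j + l) = k * min i j + l := by
      rcases le_total i j with h | h
      · have := Nat.mul_le_mul_left k h
        rw [min_eq_left h, min_eq_left (by omega)]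
      · have := Nat.mul_le_mul_left k h
        rw [min_eq_right h, min_eq_right (by omega)]
    rw [h1, h2, h3]
    simp only [map_mul, map_pow]
    rw [pow_add, pow_mul, rel1, mul_pow]
    rcases le_total i j with h | h
    · obtain ⟨d, rfl⟩ := Nat.exists_eq_add_of_le h
      simp; ring
    · obtain ⟨d, rfl⟩ := Nat.exists_eq_add_of_le h
      simp; ring
  exact DFunLike.congr_fun this p

lemma mem_J (k : ℕ) (p : MvPolynomial (Fin 3) ℂ) :
    p ∈ J k ↔ ∀ s ∈ p.support, k ≤ s 0 ∧ 1 ≤ s 2 := by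
  have : J k = Ideal.span ((fun s => monomial s (1 : ℂ)) ''
      {Finsupp.equivFunOnFinite.symm ![k, 0, 1]}) := by
    rw [Set.image_singleton, mon3]; simp [J]
  rw [this, mem_ideal_span_monomial_image]
  simp [Finsupp.le_def, Fin.forall_fin_succ]

lemma psi_J (k : ℕ) (hk : 2 ≤ k) (p : MvPolynomial (Fin 3) ℂ) (hp : p ∈ J k) : psi k p = 0 := by
  rw [mem_J] at hp
  rw [p.as_sum, map_sum]
  refine Finset.sum_eq_zero fun s hs => ?_
  obtain ⟨h1, h2⟩ := hp s hs
  have : monomial s (coeff s p) = coeff s p • monomial s (1 : ℂ) := by simp [smul_monomial]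
  rw [this, map_smul, mon3, psi_mon]
  generalize s 0 = a, s 1 = b, s 2 = c at *
  split_ifs with h
  swap
  · simp
  obtain ⟨c, rfl⟩ := Nat.exists_eq_add_of_le h2
  have key : (Ideal.Quotient.mk (I k)) (X 0 ^ ((a - b) / k) * X 1 ^ ((b - a) / k)
      * X 2 ^ min a b * X 3 ^ (1 + c)) = 0 := by
    simp only [map_mul, map_pow]
    rcases le_or_gt k b with hb | hb
    · obtain ⟨d, hd⟩ := Nat.exists_eq_add_of_le (le_min h1 hb)
      rw [hd, pow_add, rel1]
      linear_combination (Ideal.Quotient.mk (I k) (X 0) ^ ((a - b) / k) *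
        Ideal.Quotient.mk (I k) (X 1) ^ ((b - a) / k) * Ideal.Quotient.mk (I k) (X 1) *
        Ideal.Quotient.mk (I k) (X 2) ^ d * Ideal.Quotient.mk (I k) (X 3) ^ c) * rel2 k
    · have hd : k ∣ a - b := (Nat.modEq_iff_dvd' (by omega)).1 h.symm
      obtain ⟨d, hd⟩ := hd
      have : d ≠ 0 := by rintro rfl; omega
      obtain ⟨e, rfl⟩ := Nat.exists_eq_succ_of_ne_zero this
      rw [hd, Nat.mul_div_cancel_left _ (by omega), Nat.succ_eq_add_one]
      linear_combination (Ideal.Quotient.mk (I k) (X 0) ^ e *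
        Ideal.Quotient.mk (I k) (X 1) ^ ((b - a) / k) *
        Ideal.Quotient.mk (I k) (X 2) ^ (min a b) * Ideal.Quotient.mk (I k) (X 3) ^ c) * rel2 k
  rw [key, smul_zero]

lemma phi_I (k : ℕ) (p : MvPolynomial (Fin 4) ℂ) (hp : p ∈ I k) : phi k p ∈ J k := by
  have : I k ≤ (J k).comap (phi k) := by
    rw [I, Ideal.span_le]
    rintro q (rfl | rfl)
    · simp [phi, mul_pow]
    · simp only [SetLike.mem_coe, Ideal.mem_comap]
      exact Ideal.subset_span (by simp [phi])
  exact this hp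

lemma sigma_monomial (ζ : ℂ) (s : Fin 3 →₀ ℕ) (c : ℂ) :
    sigma ζ (monomial s c) = monomial s (ζ ^ s 0 * ζ⁻¹ ^ s 1 * c) := by
  have h (c : ℂ) : monomial s c = C c * monomial s (1 : ℂ) := by simp [C_mul_monomial]
  rw [h, h (_ * c), mon3]
  simp only [sigma, map_mul, map_pow, aeval_X, algHom_C, algebraMap_eq, Matrix.cons_val]
  ring

lemma coeff_sigma (ζ : ℂ) (s : Fin 3 →₀ ℕ) (p : MvPolynomial (Fin 3) ℂ) :
    coeff s (sigma ζ p) = ζ ^ s 0 * ζ⁻¹ ^ s 1 * coeff s p := by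
  induction p using MvPolynomial.induction_on' with
  | monomial u a =>
    rw [sigma_monomial, coeff_monomial, coeff_monomial]
    split_ifs with h
    · subst h; ring
    · ring
  | add p q hp hq =>
    rw [map_add, coeff_add, coeff_add, hp, hq]; ring

lemma sigma_J (k : ℕ) (ζ : ℂ) (p : MvPolynomial (Fin 3) ℂ) (hp : p ∈ J k) : sigma ζ p ∈ J k := by
  rw [mem_J] at *
  intro s hs
  apply hp
  rw [mem_support_iff, coeff_sigma] at hs
  rw [mem_support_iff]
  exact right_ne_zero_of_mul hs

lemma sigma_phi (k : ℕ) (hk : 2 ≤ k) (ζ : ℂ) (hζ : IsPrimitiveRoot ζ k)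
    (p : MvPolynomial (Fin 4) ℂ) : sigma ζ (phi k p) = phi k p := by
  have h0 : ζ ≠ 0 := hζ.ne_zero (by omega)
  have : (sigma ζ).comp (phi k) = phi k := by
    ext1 i
    fin_cases i
    · have : (C ζ : MvPolynomial (Fin 3) ℂ) ^ k = 1 := by rw [← C_pow, hζ.pow_eq_one, C_1]
      simp [sigma, phi, mul_pow, this, -aeval_eq_bind₁]
    · have : (C ζ⁻¹ : MvPolynomial (Fin 3) ℂ) ^ k = 1 := by
        rw [← C_pow, inv_pow, hζ.pow_eq_one, inv_one, C_1]
      simp [sigma, phi, mul_pow, this, -aeval_eq_bind₁]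
    · have : (C ζ * C ζ⁻¹ : MvPolynomial (Fin 3) ℂ) = 1 := by
        rw [← C_mul, mul_inv_cancel₀ h0, C_1]
      simp [sigma, phi]
      linear_combination (X 0 * X 1) * this
    · simp [sigma, phi]
  exact DFunLike.congr_fun this p

lemma mono_range (k a b c : ℕ) (h : a ≡ b [MOD k]) :
    ∃ q, phi k q = X 0 ^ a * X 1 ^ b * X 2 ^ c := by
  rcases le_total a b with hab | hab
  · obtain ⟨d, hd⟩ := (Nat.modEq_iff_dvd' hab).1 h
    obtain rfl : b = a + k * d := by omega
    exact ⟨X 1 ^ d * X 2 ^ a * X 3 ^ c, by simp [phi]; ring⟩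
  · obtain ⟨d, hd⟩ := (Nat.modEq_iff_dvd' hab).1 h.symm
    obtain rfl : a = b + k * d := by omega
    exact ⟨X 0 ^ d * X 2 ^ b * X 3 ^ c, by simp [phi]; ring⟩

lemma surj_aux (k : ℕ) (hk : 2 ≤ k) (ζ : ℂ) (hζ : IsPrimitiveRoot ζ k)
    (p : MvPolynomial (Fin 3) ℂ) (hp : sigma ζ p - p ∈ J k) :
    ∃ q, Ideal.Quotient.mk (J k) (phi k q) = Ideal.Quotient.mk (J k) p := by
  have h0 : ζ ≠ 0 := hζ.ne_zero (by omega)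
  rw [mem_J] at hp
  have key : ∀ s ∈ p.support, ∃ q, Ideal.Quotient.mk (J k) (phi k q) =
      Ideal.Quotient.mk (J k) (monomial s (coeff s p)) := by
    intro s hs
    rw [mem_support_iff] at hs
    by_cases h : s 0 ≡ s 1 [MOD k]
    · obtain ⟨q, hq⟩ := mono_range k (s 0) (s 1) (s 2) h
      refine ⟨C (coeff s p) * q, ?_⟩
      rw [map_mul, hq, ← mon3]
      congr 1
      simp [phi, C_mul_monomial]
    · refine ⟨0, ?_⟩
      rw [map_zero, map_zero, eq_comm, Ideal.Quotient.eq_zero_iff_mem, mem_J]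
      have hs' : s ∈ (sigma ζ p - p).support := by
        rw [mem_support_iff, coeff_sub, coeff_sigma]
        intro h'
        apply h
        have h1 : ζ ^ s 0 * ζ⁻¹ ^ s 1 = 1 := by
          apply mul_right_cancel₀ hs
          linear_combination h'
        have h2 : ζ ^ s 0 = ζ ^ s 1 := by
          rw [inv_pow] at h1
          field_simp at h1
          exact h1
        have h3 : (hζ.isUnit (by omega)).unit ^ s 0 = (hζ.isUnit (by omega)).unit ^ s 1 :=
          Units.ext (by simpa using h2)
        rw [pow_eq_pow_iff_modEq, ← orderOf_units, IsUnit.unit_spec, ← hζ.eq_orderOf] at h3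
        exact h3
      intro t ht
      have := support_monomial_subset ht
      rw [Finset.mem_singleton] at this
      subst this
      exact hp _ hs'
  choose! q hq using key
  refine ⟨∑ s ∈ p.support, q s, ?_⟩
  conv_rhs => rw [p.as_sum]
  rw [map_sum, map_sum, map_sum]
  exact Finset.sum_congr rfl hq

/-- For `ζ` a primitive `k`-th root of unity, the action of σ on `ℂ[u,v,t]` preserves the ideal
`(u^k·t)` and hence descends to `ℂ[u,v,t]/(u^k·t)`; the subring of invariants of this quotient
is isomorphic as a ℂ-algebra to `ℂ[x,y,z,t]/(x·y − z^k, x·t)` via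
`x ↦ u^k, y ↦ v^k, z ↦ u·v, t ↦ t`. -/
theorem stmt2 (k : ℕ) (hk : 2 ≤ k) (ζ : ℂ) (hζ : IsPrimitiveRoot ζ k) :
    (∀ p ∈ J k, sigma ζ p ∈ J k) ∧
    ∀ h : J k ≤ (J k).comap (sigma ζ),
      ∃ e : (MvPolynomial (Fin 4) ℂ ⧸ I k) ≃ₐ[ℂ]
            AlgHom.equalizer (Ideal.quotientMapₐ (J k) (sigma ζ) h)
              (AlgHom.id ℂ (MvPolynomial (Fin 3) ℂ ⧸ J k)),
        ∀ p : MvPolynomial (Fin 4) ℂ,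
          (e (Ideal.Quotient.mk (I k) p) : MvPolynomial (Fin 3) ℂ ⧸ J k) =
            Ideal.Quotient.mk (J k) (aeval ![X 0 ^ k, X 1 ^ k, X 0 * X 1, X 2] p) := by
  refine ⟨sigma_J k ζ, fun h => ?_⟩
  let f : (MvPolynomial (Fin 4) ℂ ⧸ I k) →ₐ[ℂ] (MvPolynomial (Fin 3) ℂ ⧸ J k) :=
    Ideal.quotientMapₐ (J k) (phi k) (fun p hp => phi_I k p hp)
  have hf (p) : f (Ideal.Quotient.mk (I k) p) = Ideal.Quotient.mk (J k) (phi k p) := rfl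
  have hg (p) : Ideal.quotientMapₐ (J k) (sigma ζ) h (Ideal.Quotient.mk (J k) p) =
    Ideal.Quotient.mk (J k) (sigma ζ p) := rfl
  have hmem : ∀ x, f x ∈ AlgHom.equalizer (Ideal.quotientMapₐ (J k) (sigma ζ) h)
              (AlgHom.id ℂ (MvPolynomial (Fin 3) ℂ ⧸ J k)) := by
    intro x
    obtain ⟨p, rfl⟩ := Ideal.Quotient.mk_surjective x
    rw [AlgHom.mem_equalizer, hf, hg, sigma_phi k hk ζ hζ]
    rfl
  refine ⟨AlgEquiv.ofBijective (f.codRestrict _ hmem) ⟨?_, ?_⟩, fun p => rfl⟩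
  · rw [injective_iff_map_eq_zero]
    intro x hx
    obtain ⟨p, rfl⟩ := Ideal.Quotient.mk_surjective x
    have hx' : f (Ideal.Quotient.mk (I k) p) = 0 := congrArg Subtype.val hx
    rw [hf, Ideal.Quotient.eq_zero_iff_mem] at hx'
    rw [← psi_phi k hk, psi_J k hk _ hx']
  · rintro ⟨x, hx⟩
    obtain ⟨p, rfl⟩ := Ideal.Quotient.mk_surjective x
    rw [AlgHom.mem_equalizer, hg, AlgHom.id_apply, Ideal.Quotient.eq] at hx
    obtain ⟨q, hq⟩ := surj_aux k hk ζ hζ p hx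
    exact ⟨Ideal.Quotient.mk (I k) q, Subtype.ext hq⟩
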